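/- arXiv:0811.1416 — 2 statements merged into one kernel-verified Lean document; each statement's English description precedes it below -/
import Mathlib

section
/- Let x₀, y₀ ∈ S^d with (x₀,y₀) = 0, and define G″ ∈ P_n by G″(y) = (y₀,y)²·g_w″((x₀,y)) − (x₀,y)·g_w′((x₀,y)); G″ is the second derivative at t = 0 of the curve t ↦ G_{x(t)} with x(t) = x₀·cos t + y₀·sin t. Then ⟨G″, G″⟩_w = 3·g_w″(1) + g_w′(1). -/
open MeasureTheory Finset
open scoped RealInnerProductSpace

noncomputable section
attribute [local instance] Classical.propDecidable

/-- Euclidean space `ℝ^{d+1}`. -/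
abbrev Euc (d : ℕ) := EuclideanSpace ℝ (Fin (d + 1))

/-- The unit sphere `S^d ⊆ ℝ^{d+1}`. -/
abbrev Sph (d : ℕ) := Metric.sphere (0 : Euc d) 1

/-- Real-valued functions on the sphere. -/
abbrev SphFun (d : ℕ) := Sph d → ℝ

/-- The normalized surface measure `μ_d` on `S^d`. -/
noncomputable def muSph (d : ℕ) : Measure (Sph d) :=
  ((volume : Measure (Euc d)).toSphere Set.univ)⁻¹ • (volume : Measure (Euc d)).toSphere

/-- Gegenbauer polynomials `C_k^α`, normalized so that `C_k^α(1) = binom(2α+k-1, k)`,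
defined by the standard three-term recurrence. -/
noncomputable def gegenbauer (α : ℝ) : ℕ → Polynomial ℝ
  | 0 => 1
  | 1 => Polynomial.C (2 * α) * Polynomial.X
  | n + 2 =>
      Polynomial.C (2 * ((n : ℝ) + 1 + α) / ((n : ℝ) + 2)) *
          (Polynomial.X * gegenbauer α (n + 1)) -
        Polynomial.C (((n : ℝ) + 2 * α) / ((n : ℝ) + 2)) * gegenbauer α n

/-- `dim H_k = ((2k+d-1)/(k+d-1))·binom(d+k-1, k)`. -/
noncomputable def dimHarm (d k : ℕ) : ℝ :=
  ((2 * (k : ℝ) + d - 1) / ((k : ℝ) + d - 1)) * (Nat.choose (d + k - 1) k : ℝ)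

/-- The kernel polynomial `g_w(t) = Σ_{k=1}^n dim H_k / (w_k G_k^α(1)) · G_k^α(t)`,
with `α = (d-1)/2` and `w_k = k(k+d-1)`. -/
noncomputable def gw (d n : ℕ) : Polynomial ℝ :=
  ∑ k ∈ Finset.Icc 1 n,
    Polynomial.C (dimHarm d k /
        (((k : ℝ) * ((k : ℝ) + d - 1)) * (gegenbauer (((d : ℝ) - 1) / 2) k).eval 1)) *
      gegenbauer (((d : ℝ) - 1) / 2) k

/-- The Laplace operator on polynomials in `d+1` variables. -/
noncomputable def polyLaplacian (d : ℕ) (p : MvPolynomial (Fin (d + 1)) ℝ) :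
    MvPolynomial (Fin (d + 1)) ℝ :=
  ∑ i : Fin (d + 1), MvPolynomial.pderiv i (MvPolynomial.pderiv i p)

/-- The space `H_k` of spherical harmonics of degree `k` on `S^d`: restrictions to the
sphere of harmonic homogeneous polynomials of degree `k`. -/
def sphHarmonic (d k : ℕ) : Set (SphFun d) :=
  {f | ∃ p : MvPolynomial (Fin (d + 1)) ℝ, p.IsHomogeneous k ∧ polyLaplacian d p = 0 ∧
        ∀ x : Sph d, f x = MvPolynomial.eval (fun i => (x : Euc d) i) p}

/-- The space `P_n`: restrictions to `S^d` of polynomials of total degree at most `n`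
having zero mean over the sphere. -/
def PolySph (d n : ℕ) : Set (SphFun d) :=
  {f | ∃ p : MvPolynomial (Fin (d + 1)) ℝ, p.totalDegree ≤ n ∧
        (∀ x : Sph d, f x = MvPolynomial.eval (fun i => (x : Euc d) i) p) ∧
        ∫ x, f x ∂muSph d = 0}

/-- The `H_k`-component of `P ∈ P_n` in the decomposition `P_n = ⊕_{k=1}^n H_k`
(the decomposition is unique; an arbitrary one is chosen if it exists). -/
noncomputable def harmComponent (d n : ℕ) (P : SphFun d) (k : ℕ) : SphFun d :=
  if h : ∃ c : ℕ → SphFun d, (∀ j, c j ∈ sphHarmonic d j) ∧ P = ∑ j ∈ Finset.Icc 1 n, c j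
  then h.choose k else 0

/-- The inner product `⟨P,Q⟩_w = Σ_{k=1}^n w_k ∫ P_k Q_k dμ_d` with `w_k = k(k+d-1)`. -/
noncomputable def innerW (d n : ℕ) (P Q : SphFun d) : ℝ :=
  ∑ k ∈ Finset.Icc 1 n, ((k : ℝ) * ((k : ℝ) + d - 1)) *
    ∫ x, harmComponent d n P k x * harmComponent d n Q k x ∂muSph d

/-- The norm `‖P‖_w = ⟨P,P⟩_w^{1/2}`. -/
noncomputable def normW (d n : ℕ) (P : SphFun d) : ℝ :=
  Real.sqrt (innerW d n P P)

/-- The function `G_x(y) = g_w((x,y))` on the sphere, for `x ∈ ℝ^{d+1}`. -/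
noncomputable def GxFun (d n : ℕ) (x : Euc d) : SphFun d :=
  fun y => (gw d n).eval ⟪x, (y : Euc d)⟫

/-- The extension of a function on the sphere to `ℝ^{d+1} \ {0}` by `x ↦ f(x/‖x‖)`
(with value `0` at the origin). -/
noncomputable def extendSph (d : ℕ) (f : SphFun d) : Euc d → ℝ :=
  fun x =>
    if hx : x = 0 then 0
    else f ⟨‖x‖⁻¹ • x, by
      rw [mem_sphere_zero_iff_norm, norm_smul, norm_inv, norm_norm,
        inv_mul_cancel₀ (norm_ne_zero_iff.mpr hx)]⟩

/-- The spherical gradient `∇f(x) = (∂/∂x) f(x/‖x‖)`. -/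
noncomputable def sphGrad (d : ℕ) (f : SphFun d) (x : Euc d) : Euc d :=
  gradient (extendSph d f) x

/-- The spherical Hessian quadratic form `∇²f(x)·y·y`. -/
noncomputable def sphHessApply (d : ℕ) (f : SphFun d) (x y : Euc d) : ℝ :=
  iteratedFDeriv ℝ 2 (extendSph d f) x ![y, y]

/-- `‖∇²f(x₀)‖ = max { |∇²f(x₀)·y·y| : ‖y‖ = 1, (y,x₀) = 0 }`. -/
noncomputable def sphHessNorm (d : ℕ) (f : SphFun d) (x₀ : Sph d) : ℝ :=
  sSup {r : ℝ | ∃ y : Euc d, ‖y‖ = 1 ∧ ⟪y, (x₀ : Euc d)⟫ = 0 ∧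
    r = |sphHessApply d f (x₀ : Euc d) y|}

/-- `x_1, …, x_N ∈ S^d` form a spherical `n`-design. -/
def IsSphericalDesign (d n N : ℕ) (x : Fin N → Sph d) : Prop :=
  ∀ p : MvPolynomial (Fin (d + 1)) ℝ, p.totalDegree ≤ n →
    ∫ y, MvPolynomial.eval (fun j => (y : Euc d) j) p ∂muSph d =
      (N : ℝ)⁻¹ * ∑ i, MvPolynomial.eval (fun j => ((x i : Euc d)) j) p

/-- An area-regular partition `R_1, …, R_N` of `S^d`: closed sets with pairwise disjoint
interiors, covering the sphere, each of normalized measure `1/N`. -/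
def IsAreaRegularPartition (d N : ℕ) (R : Fin N → Set (Sph d)) : Prop :=
  (∀ i, IsClosed (R i)) ∧ (⋃ i, R i) = Set.univ ∧
    (∀ i j, i ≠ j → interior (R i) ∩ interior (R j) = ∅) ∧
    ∀ i, muSph d (R i) = 1 / N

/-- The Marcinkiewicz–Zygmund property of degree `m` for points `x_1, …, x_N ∈ S^d`. -/
def MZProperty (d m N : ℕ) (x : Fin N → Sph d) : Prop :=
  ∀ p : MvPolynomial (Fin (d + 1)) ℝ, p.totalDegree ≤ m →
    (1 / 2) * (∫ y, |MvPolynomial.eval (fun j => (y : Euc d) j) p| ∂muSph d) ≤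
        (N : ℝ)⁻¹ * ∑ i, |MvPolynomial.eval (fun j => ((x i : Euc d)) j) p| ∧
      (N : ℝ)⁻¹ * ∑ i, |MvPolynomial.eval (fun j => ((x i : Euc d)) j) p| ≤
        (3 / 2) * ∫ y, |MvPolynomial.eval (fun j => (y : Euc d) j) p| ∂muSph d

/-- The point `x_i(P)`: move `x` along the great circle in the direction of the spherical
gradient `∇P(x)` through angle `‖∇P(x)‖`. -/
noncomputable def movePoint (d : ℕ) (P : SphFun d) (x : Sph d) : Euc d :=
  if _h : sphGrad d P (x : Euc d) = 0 then (x : Euc d)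
  else Real.cos ‖sphGrad d P (x : Euc d)‖ • (x : Euc d) +
    Real.sin ‖sphGrad d P (x : Euc d)‖ • (‖sphGrad d P (x : Euc d)‖⁻¹ • sphGrad d P (x : Euc d))

/-- The map `L(P) = (1/N) Σ_i G_{x_i(P)}`. -/
noncomputable def Lmap (d n N : ℕ) (x : Fin N → Sph d) (P : SphFun d) : SphFun d :=
  (N : ℝ)⁻¹ • ∑ i, GxFun d n (movePoint d P (x i))

end

/-!
Let `L` be the derivative along the rotations in the plane of `x₀` and `y₀`. On functions of
`t = (x₀, y)` it acts through `L t = -(y₀, y)` and `L (y₀, y) = t`, so that `G'' = L² G_{x₀}`.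
Rotations preserve `μ_d`, hence `L` is antisymmetric in `L²(μ_d)`; as `L` maps each `H_k` to itself,
it is antisymmetric for `⟨·, ·⟩_w` as well. Since `G_x` is the reproducing kernel of `⟨·, ·⟩_w`,
`⟨L² G_{x₀}, L² G_{x₀}⟩_w = ⟨G_{x₀}, L⁴ G_{x₀}⟩_w = (L⁴ G_{x₀})(x₀)`, and at `t = 1`, `(y₀, y) = 0`
the expansion of `L⁴` leaves only `3 g_w'' + g_w'`.

For `d = 1` the Gegenbauer parameter is `0`, the polynomials `gegenbauer 0 k` with `k ≥ 1` vanish,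
and so do `gw` and both sides.

The integration-by-parts formula `∫ ∂_a p = (m + d) ∫ (a, y) p` for `p` homogeneous of degree `m`,
itself a consequence of rotation invariance, yields the orthogonality of the `H_k` and, by induction
on `k`, the reproducing property of the zonal harmonics.
-/

section Derivations

open MvPolynomial

variable {R σ : Type*}

theorem derivation_eq_sum_pderiv [CommSemiring R] [Fintype σ]
    (D : Derivation R (MvPolynomial σ R) (MvPolynomial σ R)) (p : MvPolynomial σ R) :
    D p = ∑ i, D (X i) * pderiv i p := by
  classical
  induction p using MvPolynomial.induction_on with
  | C c => simp
  | add p q hp hq => simp only [map_add, hp, hq, mul_add, sum_add_distrib]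
  | mul_X p j hp =>
    simp only [Derivation.leibniz, smul_eq_mul, hp, pderiv_X, mul_add, sum_add_distrib,
      Pi.single_apply, mul_ite, mul_one, mul_zero, sum_ite_eq, mem_univ, if_true, mul_sum]
    simp only [mul_left_comm, mul_comm]

theorem hasDerivAt_eval_of_integralCurve
    (D : Derivation ℝ (MvPolynomial σ ℝ) (MvPolynomial σ ℝ)) {γ : ℝ → σ → ℝ} {t : ℝ}
    (hγ : ∀ i, HasDerivAt (fun s => γ s i) (eval (γ t) (D (X i))) t) (p : MvPolynomial σ ℝ) :
    HasDerivAt (fun s => eval (γ s) p) (eval (γ t) (D p)) t := by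
  induction p using MvPolynomial.induction_on with
  | C c => simpa using hasDerivAt_const t c
  | add p q hp hq => simpa only [map_add] using hp.fun_add hq
  | mul_X p i hp =>
    simp only [Derivation.leibniz, smul_eq_mul, map_add, map_mul, eval_X]
    exact (hp.fun_mul (hγ i)).congr_deriv (by ring)

theorem derivation_derivation_aeval_of_rotation [CommRing R] {A : Type*} [CommRing A] [Algebra R A]
    (D : Derivation R A A) {u v : A} (hu : D u = -v) (hv : D v = u) (g : Polynomial R) :
    D (D (Polynomial.aeval u g)) =
      v ^ 2 * Polynomial.aeval u g.derivative.derivative -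
        u * Polynomial.aeval u g.derivative := by
  simp only [Derivation.map_aeval, hu, hv, Derivation.leibniz, map_neg, smul_eq_mul]
  ring

theorem derivation_fourth_aeval_of_rotation [CommRing R] {A : Type*} [CommRing A] [Algebra R A]
    (D : Derivation R A A) {u v : A} (hu : D u = -v) (hv : D v = u) (g : Polynomial R) :
    D (D (D (D (Polynomial.aeval u g)))) =
      v ^ 4 * Polynomial.aeval u g.derivative.derivative.derivative.derivative -
        6 * u * v ^ 2 * Polynomial.aeval u g.derivative.derivative.derivative +
        (3 * u ^ 2 - 4 * v ^ 2) * Polynomial.aeval u g.derivative.derivative +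
        u * Polynomial.aeval u g.derivative := by
  simp only [Derivation.map_aeval, hu, hv, Derivation.leibniz, map_neg, map_add, smul_eq_mul]
  ring

end Derivations

noncomputable section EuclideanPolynomials

open MvPolynomial

variable {ι : Type*}

/-- The derivative `∂_a` in the direction `a`, as a derivation of polynomials. -/
def dirDeriv (a : EuclideanSpace ℝ ι) : Derivation ℝ (MvPolynomial ι ℝ) (MvPolynomial ι ℝ) :=
  mkDerivation ℝ fun i => C (a i)

variable (a b : EuclideanSpace ℝ ι) (p : MvPolynomial ι ℝ)

theorem dirDeriv_X (i : ι) : dirDeriv a (X i) = C (a i) :=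
  mkDerivation_X ..

theorem dirDeriv_single [DecidableEq ι] (i : ι) :
    dirDeriv (EuclideanSpace.single i (1 : ℝ)) = pderiv i :=
  derivation_ext fun j => by
    simp [dirDeriv_X, pderiv_X, Pi.single_apply, PiLp.single_apply, apply_ite C, eq_comm]

theorem dirDeriv_comm : dirDeriv a (dirDeriv b p) = dirDeriv b (dirDeriv a p) := by
  have commutator_eq_zero : ⁅dirDeriv a, dirDeriv b⁆ = 0 :=
    derivation_ext fun i => by simp [Derivation.commutator_apply, dirDeriv_X]
  simpa [Derivation.commutator_apply, sub_eq_zero] using DFunLike.congr_fun commutator_eq_zero p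

theorem dirDeriv_eq_sum [Fintype ι] : dirDeriv a p = ∑ i, a i • pderiv i p := by
  simp only [derivation_eq_sum_pderiv (dirDeriv a) p, dirDeriv_X, smul_eq_C_mul]

variable {p} in
theorem isHomogeneous_dirDeriv [Finite ι] {k : ℕ} (hp : p.IsHomogeneous k) :
    (dirDeriv a p).IsHomogeneous (k - 1) := by
  cases nonempty_fintype ι
  rw [dirDeriv_eq_sum]
  exact (homogeneousSubmodule ι ℝ (k - 1)).sum_mem fun i _ =>
    (homogeneousSubmodule ι ℝ (k - 1)).smul_mem _ hp.pderiv

variable {p} in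
theorem eval_dirDeriv_self [Finite ι] {k : ℕ} (hp : p.IsHomogeneous k) :
    eval (fun i => a i) (dirDeriv a p) = k * eval (fun i => a i) p := by
  cases nonempty_fintype ι
  simpa [dirDeriv_eq_sum, smul_eval] using congrArg (eval fun i => a i) hp.sum_X_mul_pderiv

variable [Fintype ι]

/-- The linear form `y ↦ (a, y)` as a polynomial in the coordinates of `y`. -/
def linForm : MvPolynomial ι ℝ := ∑ i, C (a i) * X i

/-- The angular derivative `(a, y) ∂_b - (b, y) ∂_a`: differentiation along the rotations in the
plane of `a` and `b`. -/
def angDeriv : Derivation ℝ (MvPolynomial ι ℝ) (MvPolynomial ι ℝ) :=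
  linForm a • dirDeriv b - linForm b • dirDeriv a

theorem eval_linForm (y : EuclideanSpace ℝ ι) : eval (fun i => y i) (linForm a) = ⟪a, y⟫ := by
  simp [linForm, PiLp.inner_apply, mul_comm]

theorem linForm_single [DecidableEq ι] (i : ι) :
    linForm (EuclideanSpace.single i (1 : ℝ)) = X i := by
  simp [linForm, PiLp.single_apply, apply_ite C]

theorem isHomogeneous_linForm : (linForm a).IsHomogeneous 1 :=
  .sum _ _ _ fun i _ => by simpa using (isHomogeneous_C ι (a i)).mul (isHomogeneous_X ℝ i)

theorem isHomogeneous_psum (n : ℕ) : (psum ι ℝ n).IsHomogeneous n :=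
  .sum _ _ _ fun i _ => isHomogeneous_X_pow i n

theorem dirDeriv_linForm : dirDeriv a (linForm b) = C ⟪a, b⟫ := by
  simp [linForm, dirDeriv_X, PiLp.inner_apply]

theorem dirDeriv_psum_two : dirDeriv a (psum ι ℝ 2) = (2 : ℝ) • linForm a := by
  simp only [psum, linForm, map_sum, Derivation.leibniz_pow, dirDeriv_X, smul_sum, smul_eq_C_mul,
    smul_eq_mul, pow_one, nsmul_eq_mul, Nat.cast_ofNat, map_ofNat, Nat.add_one_sub_one]
  exact sum_congr rfl fun i _ => by ring

theorem angDeriv_apply : angDeriv a b p = linForm a * dirDeriv b p - linForm b * dirDeriv a p := by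
  simp [angDeriv]

variable {p} in
theorem isHomogeneous_angDeriv {k : ℕ} (hp : p.IsHomogeneous k) :
    (angDeriv a b p).IsHomogeneous k := by
  rw [angDeriv_apply]
  obtain rfl | hk := k.eq_zero_or_pos
  · obtain ⟨c, rfl⟩ : ∃ c, p = C c :=
      ⟨_, totalDegree_eq_zero_iff_eq_C.1 (Nat.le_zero.1 hp.totalDegree_le)⟩
    simpa using isHomogeneous_zero ι ℝ 0
  · rw [← Nat.add_sub_of_le hk]
    exact ((isHomogeneous_linForm a).mul (isHomogeneous_dirDeriv b hp)).sub
      ((isHomogeneous_linForm b).mul (isHomogeneous_dirDeriv a hp))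

variable {a b} in
theorem angDeriv_linForm_left (ha : ‖a‖ = 1) (hab : ⟪a, b⟫ = 0) :
    angDeriv a b (linForm a) = -linForm b := by
  simp [angDeriv_apply, dirDeriv_linForm, real_inner_comm a b, hab, ha]

variable {a b} in
theorem angDeriv_linForm_right (hb : ‖b‖ = 1) (hab : ⟪a, b⟫ = 0) :
    angDeriv a b (linForm b) = linForm a := by
  simp [angDeriv_apply, dirDeriv_linForm, hab, hb]

end EuclideanPolynomials

noncomputable section Harmonics

open MvPolynomial

variable {d k m : ℕ}

/-- The Laplace operator `polyLaplacian` as a linear map. -/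
def laplacian (d : ℕ) : MvPolynomial (Fin (d + 1)) ℝ →ₗ[ℝ] MvPolynomial (Fin (d + 1)) ℝ where
  toFun := polyLaplacian d
  map_add' p q := by simp [polyLaplacian, sum_add_distrib]
  map_smul' c p := by simp [polyLaplacian, smul_sum]

theorem laplacian_apply (p : MvPolynomial (Fin (d + 1)) ℝ) :
    laplacian d p = ∑ i, pderiv i (pderiv i p) := rfl

theorem laplacian_mul (p q : MvPolynomial (Fin (d + 1)) ℝ) :
    laplacian d (p * q) =
      p * laplacian d q + q * laplacian d p + (2 : ℝ) • ∑ i, pderiv i p * pderiv i q := by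
  simp only [laplacian_apply, mul_sum, smul_sum, ← sum_add_distrib]
  refine sum_congr rfl fun i _ => ?_
  simp only [Derivation.leibniz, smul_eq_mul, map_add, two_smul]
  ring

theorem laplacian_dirDeriv (a : Euc d) (p : MvPolynomial (Fin (d + 1)) ℝ) :
    laplacian d (dirDeriv a p) = dirDeriv a (laplacian d p) := by
  simp only [laplacian_apply, ← dirDeriv_single, map_sum, dirDeriv_comm _ a]

theorem pderiv_linForm (a : Euc d) (i : Fin (d + 1)) : pderiv i (linForm a) = C (a i) := by
  simp [← dirDeriv_single, dirDeriv_linForm, EuclideanSpace.inner_single_left]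

theorem laplacian_linForm (a : Euc d) : laplacian d (linForm a) = 0 := by
  simp [laplacian_apply, pderiv_linForm]

theorem laplacian_linForm_mul (a : Euc d) (p : MvPolynomial (Fin (d + 1)) ℝ) :
    laplacian d (linForm a * p) = linForm a * laplacian d p + (2 : ℝ) • dirDeriv a p := by
  simp [laplacian_mul, laplacian_linForm, pderiv_linForm, dirDeriv_eq_sum, smul_eq_C_mul]

theorem pderiv_psum_two (i : Fin (d + 1)) :
    pderiv i (psum (Fin (d + 1)) ℝ 2) = (2 : ℝ) • X i := by
  rw [← dirDeriv_single, dirDeriv_psum_two, linForm_single]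

theorem laplacian_psum_two_mul {p : MvPolynomial (Fin (d + 1)) ℝ} (hp : p.IsHomogeneous m) :
    laplacian d (psum (Fin (d + 1)) ℝ 2 * p) =
      psum (Fin (d + 1)) ℝ 2 * laplacian d p + (2 * (d + 1) + 4 * m : ℝ) • p := by
  have laplacian_psum : laplacian d (psum (Fin (d + 1)) ℝ 2) = C (2 * (d + 1 : ℝ)) := by
    simp [laplacian_apply, pderiv_psum_two, smul_eq_C_mul, mul_comm]
  have gradient_term :
      ∑ i, pderiv i (psum (Fin (d + 1)) ℝ 2) * pderiv i p = (2 * m : ℝ) • p := by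
    simp only [pderiv_psum_two, smul_mul_assoc, ← smul_sum, hp.sum_X_mul_pderiv, mul_smul,
      Nat.cast_smul_eq_nsmul]
  rw [laplacian_mul, laplacian_psum, gradient_term, mul_comm p, ← smul_eq_C_mul]
  module

/-- The harmonic homogeneous polynomials of degree `k`, whose restrictions to the sphere form
`sphHarmonic d k`. -/
def harmonicSubmodule (d k : ℕ) : Submodule ℝ (MvPolynomial (Fin (d + 1)) ℝ) :=
  homogeneousSubmodule (Fin (d + 1)) ℝ k ⊓ LinearMap.ker (laplacian d)

variable {p : MvPolynomial (Fin (d + 1)) ℝ}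

theorem mem_harmonicSubmodule :
    p ∈ harmonicSubmodule d k ↔ p.IsHomogeneous k ∧ laplacian d p = 0 := Iff.rfl

theorem exists_eq_C_of_mem_harmonicSubmodule_zero (hp : p ∈ harmonicSubmodule d 0) :
    ∃ c, p = C c :=
  ⟨_, totalDegree_eq_zero_iff_eq_C.1 (Nat.le_zero.1 hp.1.totalDegree_le)⟩

theorem dirDeriv_mem_harmonicSubmodule (a : Euc d) (hp : p ∈ harmonicSubmodule d k) :
    dirDeriv a p ∈ harmonicSubmodule d (k - 1) :=
  mem_harmonicSubmodule.2 ⟨isHomogeneous_dirDeriv a hp.1, by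
    rw [laplacian_dirDeriv, (mem_harmonicSubmodule.1 hp).2, map_zero]⟩

theorem angDeriv_mem_harmonicSubmodule (a b : Euc d) (hp : p ∈ harmonicSubmodule d k) :
    angDeriv a b p ∈ harmonicSubmodule d k := by
  obtain ⟨hom, harm⟩ := mem_harmonicSubmodule.1 hp
  refine mem_harmonicSubmodule.2 ⟨isHomogeneous_angDeriv a b hom, ?_⟩
  simp only [angDeriv_apply, map_sub, laplacian_linForm_mul, laplacian_dirDeriv, harm, map_zero,
    mul_zero, zero_add, dirDeriv_comm a b, sub_self]

end Harmonics

noncomputable section SphereRotations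

variable {E : Type*} [NormedAddCommGroup E] [InnerProductSpace ℝ E]

/-- The self-homeomorphism of the unit sphere induced by a linear isometry. -/
def sphereHomeomorph (e : E ≃ₗᵢ[ℝ] E) : Metric.sphere (0 : E) 1 ≃ₜ Metric.sphere (0 : E) 1 :=
  e.toHomeomorph.subtype fun y => by simp

theorem coe_sphereHomeomorph (e : E ≃ₗᵢ[ℝ] E) (y : Metric.sphere (0 : E) 1) :
    (sphereHomeomorph e y : E) = e y := rfl

theorem image_coe_preimage_sphereHomeomorph (e : E ≃ₗᵢ[ℝ] E) (s : Set (Metric.sphere (0 : E) 1)) :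
    ((↑) '' (sphereHomeomorph e ⁻¹' s) : Set E) = e ⁻¹' ((↑) '' s) := by
  ext z
  constructor
  · rintro ⟨y, hy, rfl⟩
    exact ⟨_, hy, rfl⟩
  · rintro ⟨y, hy, hyz⟩
    have hz : ‖z‖ = 1 := by rw [← e.norm_map, ← hyz, norm_eq_of_mem_sphere]
    refine ⟨⟨z, mem_sphere_zero_iff_norm.2 hz⟩, ?_, rfl⟩
    rwa [Set.mem_preimage, show sphereHomeomorph e ⟨z, _⟩ = y from Subtype.ext hyz.symm]

open Pointwise in
theorem measurePreserving_sphereHomeomorph [FiniteDimensional ℝ E] [MeasurableSpace E]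
    [BorelSpace E] (e : E ≃ₗᵢ[ℝ] E) :
    MeasurePreserving (sphereHomeomorph e) (volume : Measure E).toSphere
      (volume : Measure E).toSphere := by
  refine ⟨(sphereHomeomorph e).measurable, Measure.ext fun s hs => ?_⟩
  have cone_preimage : (Set.Ioo (0 : ℝ) 1 • (e ⁻¹' ((↑) '' s)) : Set E) =
      e ⁻¹' (Set.Ioo (0 : ℝ) 1 • ((↑) '' s)) := by
    ext z
    constructor
    · rintro ⟨r, hr, w, hw, rfl⟩
      exact ⟨r, hr, e w, hw, (e.map_smul r w).symm⟩
    · rintro ⟨r, hr, w, hw, hrw : r • w = e z⟩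
      refine ⟨r, hr, e.symm w, by simpa using hw, ?_⟩
      simpa using congrArg e.symm hrw
  rw [Measure.map_apply (sphereHomeomorph e).measurable hs, Measure.toSphere_apply' _ hs,
    Measure.toSphere_apply' _ ((sphereHomeomorph e).measurable hs),
    image_coe_preimage_sphereHomeomorph, cone_preimage]
  congr 1
  exact e.measurePreserving.measure_preimage_equiv (f := e.toMeasurableEquiv) _

/-- The infinitesimal rotation `y ↦ (a, y) b - (b, y) a` in the plane of `a` and `b`. -/
def planeRotationGenerator (a b : E) : E →L[ℝ] E :=
  InnerProductSpace.rankOne ℝ b a - InnerProductSpace.rankOne ℝ a b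

theorem planeRotationGenerator_apply (a b y : E) :
    planeRotationGenerator a b y = ⟪a, y⟫ • b - ⟪b, y⟫ • a := rfl

variable [CompleteSpace E]

theorem star_planeRotationGenerator (a b : E) :
    star (planeRotationGenerator a b) = -planeRotationGenerator a b := by
  simp [planeRotationGenerator, ContinuousLinearMap.star_eq_adjoint]

theorem exp_smul_planeRotationGenerator_mem_unitary (a b : E) (t : ℝ) :
    NormedSpace.exp (t • planeRotationGenerator a b) ∈ unitary (E →L[ℝ] E) := by
  let _ : NormedAlgebra ℚ (E →L[ℝ] E) := .restrictScalars ℚ ℝ (E →L[ℝ] E)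
  exact NormedSpace.exp_mem_unitary_of_mem_skewAdjoint
    (skewAdjoint.smul_mem t (skewAdjoint.mem_iff.2 (star_planeRotationGenerator a b)))

/-- The one-parameter group of rotations generated by `planeRotationGenerator a b`. -/
def planeRotation (a b : E) (t : ℝ) : E ≃ₗᵢ[ℝ] E :=
  Unitary.linearIsometryEquiv ⟨_, exp_smul_planeRotationGenerator_mem_unitary a b t⟩

theorem planeRotation_apply (a b y : E) (t : ℝ) :
    planeRotation a b t y = NormedSpace.exp (t • planeRotationGenerator a b) y := rfl

theorem planeRotation_zero (a b y : E) : planeRotation a b 0 y = y := by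
  rw [planeRotation_apply, zero_smul, NormedSpace.exp_zero, one_apply_eq_self]

theorem hasDerivAt_planeRotation (a b y : E) (t : ℝ) :
    HasDerivAt (fun s => planeRotation a b s y)
      (planeRotationGenerator a b (planeRotation a b t y)) t :=
  (hasDerivAt_exp_smul_const' (planeRotationGenerator a b) t).clm_apply (hasDerivAt_const t y)
    |>.congr_deriv (by simp [planeRotation_apply])

end SphereRotations

noncomputable section SphereIntegral

open MvPolynomial

variable {d m : ℕ}

instance isProbabilityMeasure_muSph (d : ℕ) : IsProbabilityMeasure (muSph d) := by
  refine ⟨?_⟩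
  rw [muSph, Measure.smul_apply, smul_eq_mul]
  exact ENNReal.inv_mul_cancel (Measure.measure_univ_ne_zero.2 (Measure.toSphere_ne_zero _))
    (measure_ne_top _ _)

instance isOpenPosMeasure_muSph (d : ℕ) : (muSph d).IsOpenPosMeasure :=
  Measure.isOpenPosMeasure_smul _ (ENNReal.inv_ne_zero.2 (measure_ne_top _ _))

theorem measurePreserving_sphereHomeomorph_muSph (e : Euc d ≃ₗᵢ[ℝ] Euc d) :
    MeasurePreserving (sphereHomeomorph e) (muSph d) (muSph d) :=
  (measurePreserving_sphereHomeomorph e).smul_measure _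

/-- Restriction of polynomials to the sphere. -/
def restrictSph (d : ℕ) : MvPolynomial (Fin (d + 1)) ℝ →ₐ[ℝ] C(Sph d, ℝ) :=
  aeval fun i => ⟨fun y => (y : Euc d) i, by fun_prop⟩

theorem restrictSph_apply (p : MvPolynomial (Fin (d + 1)) ℝ) (y : Sph d) :
    restrictSph d p y = eval (fun i => (y : Euc d) i) p := by
  induction p using MvPolynomial.induction_on with
  | C c => simp [restrictSph]
  | add p q hp hq => simp [hp, hq]
  | mul_X p i hp => rw [map_mul, ContinuousMap.mul_apply, hp]; simp [restrictSph]

theorem restrictSph_linForm (a : Euc d) (y : Sph d) :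
    restrictSph d (linForm a) y = ⟪a, (y : Euc d)⟫ := by
  rw [restrictSph_apply, eval_linForm]

theorem restrictSph_psum_two : restrictSph d (psum (Fin (d + 1)) ℝ 2) = 1 := by
  ext y
  have norm_sq := EuclideanSpace.norm_sq_eq (y : Euc d)
  rw [norm_eq_of_mem_sphere] at norm_sq
  simpa [restrictSph_apply, psum] using norm_sq.symm

theorem integrable_muSph (f : C(Sph d, ℝ)) : Integrable f (muSph d) :=
  f.continuous.integrable_of_hasCompactSupport (.of_compactSpace _)

/-- The mean of a polynomial over the sphere, as a linear form. -/
def sphIntegral (d : ℕ) : MvPolynomial (Fin (d + 1)) ℝ →ₗ[ℝ] ℝ where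
  toFun p := ∫ y, restrictSph d p y ∂muSph d
  map_add' p q := by
    simpa using integral_add (integrable_muSph (restrictSph d p)) (integrable_muSph _)
  map_smul' c p := by simp [integral_const_mul]

theorem sphIntegral_apply (p : MvPolynomial (Fin (d + 1)) ℝ) :
    sphIntegral d p = ∫ y, restrictSph d p y ∂muSph d := rfl

theorem sphIntegral_C (c : ℝ) : sphIntegral d (C c) = c := by
  simp [sphIntegral_apply]

theorem sphIntegral_psum_two_mul (p : MvPolynomial (Fin (d + 1)) ℝ) :
    sphIntegral d (psum (Fin (d + 1)) ℝ 2 * p) = sphIntegral d p := by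
  simp only [sphIntegral_apply, map_mul, restrictSph_psum_two, one_mul]

theorem hasDerivAt_restrictSph_planeRotation (a b : Euc d) (p : MvPolynomial (Fin (d + 1)) ℝ)
    (y : Sph d) (t : ℝ) :
    HasDerivAt (fun s => restrictSph d p (sphereHomeomorph (planeRotation a b s) y))
      (restrictSph d (angDeriv a b p) (sphereHomeomorph (planeRotation a b t) y)) t := by
  simp only [restrictSph_apply, coe_sphereHomeomorph]
  refine hasDerivAt_eval_of_integralCurve _ (fun i => ?_) p
  have hasDerivAt_coord :=
    (EuclideanSpace.proj i).hasFDerivAt.comp_hasDerivAt t (hasDerivAt_planeRotation a b y t)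
  refine hasDerivAt_coord.congr_deriv ?_
  simp [planeRotationGenerator_apply, angDeriv_apply, dirDeriv_X, eval_linForm]

theorem restrictSph_angDeriv_congr (a b : Euc d) {p q : MvPolynomial (Fin (d + 1)) ℝ}
    (hpq : restrictSph d p = restrictSph d q) :
    restrictSph d (angDeriv a b p) = restrictSph d (angDeriv a b q) := by
  ext y
  have hasDerivAt_p := hasDerivAt_restrictSph_planeRotation a b p y 0
  rw [hpq] at hasDerivAt_p
  have rotation_zero : sphereHomeomorph (planeRotation a b 0) y = y :=
    Subtype.ext (planeRotation_zero a b y)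
  simpa only [rotation_zero] using
    hasDerivAt_p.unique (hasDerivAt_restrictSph_planeRotation a b q y 0)

theorem integral_restrictSph_sphereHomeomorph (e : Euc d ≃ₗᵢ[ℝ] Euc d)
    (p : MvPolynomial (Fin (d + 1)) ℝ) :
    ∫ y, restrictSph d p (sphereHomeomorph e y) ∂muSph d = sphIntegral d p :=
  (measurePreserving_sphereHomeomorph_muSph e).integral_comp
    (sphereHomeomorph e).measurableEmbedding _

theorem sphIntegral_angDeriv (a b : Euc d) (p : MvPolynomial (Fin (d + 1)) ℝ) :
    sphIntegral d (angDeriv a b p) = 0 := by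
  let pullback (q : MvPolynomial (Fin (d + 1)) ℝ) (t : ℝ) : C(Sph d, ℝ) :=
    (restrictSph d q).comp (sphereHomeomorph (planeRotation a b t))
  have integral_pullback (q : MvPolynomial (Fin (d + 1)) ℝ) (t : ℝ) :
      ∫ y, pullback q t y ∂muSph d = sphIntegral d q :=
    integral_restrictSph_sphereHomeomorph _ q
  have hasDerivAt_integral := (hasDerivAt_integral_of_dominated_loc_of_deriv_le
    (F := fun t y => pullback p t y) (F' := fun t y => pullback (angDeriv a b p) t y)
    (bound := fun _ => ‖restrictSph d (angDeriv a b p)‖) (μ := muSph d) (x₀ := 0) Filter.univ_mem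
    (.of_forall fun t => (integrable_muSph (pullback p t)).aestronglyMeasurable)
    (integrable_muSph (pullback p 0))
    (integrable_muSph (pullback (angDeriv a b p) 0)).aestronglyMeasurable
    (.of_forall fun y t _ => (restrictSph d (angDeriv a b p)).norm_coe_le_norm _)
    (integrable_const _)
    (.of_forall fun y t _ => hasDerivAt_restrictSph_planeRotation a b p y t)).2
  simp only [integral_pullback] at hasDerivAt_integral
  exact hasDerivAt_integral.unique (hasDerivAt_const _ _)

theorem sphIntegral_angDeriv_mul (a b : Euc d) (p q : MvPolynomial (Fin (d + 1)) ℝ) :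
    sphIntegral d (angDeriv a b p * q) = -sphIntegral d (p * angDeriv a b q) := by
  have integral_leibniz := sphIntegral_angDeriv a b (p * q)
  rw [Derivation.leibniz, map_add, smul_eq_mul, smul_eq_mul, mul_comm q] at integral_leibniz
  exact eq_neg_of_add_eq_zero_right integral_leibniz

theorem sum_angDeriv_single_X_mul (a : Euc d) {p : MvPolynomial (Fin (d + 1)) ℝ}
    (hp : p.IsHomogeneous m) :
    ∑ j, angDeriv (EuclideanSpace.single j 1) a (X j * p) =
      psum (Fin (d + 1)) ℝ 2 * dirDeriv a p - (m + d : ℝ) • (linForm a * p) := by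
  have summand (j : Fin (d + 1)) : angDeriv (EuclideanSpace.single j 1) a (X j * p) =
      X j ^ 2 * dirDeriv a p + C (a j) * X j * p - linForm a * p -
        linForm a * (X j * pderiv j p) := by
    rw [angDeriv_apply, linForm_single, dirDeriv_single]
    simp only [Derivation.leibniz, smul_eq_mul, dirDeriv_X, pderiv_X_self]
    ring
  simp only [summand, sum_sub_distrib, sum_add_distrib, ← sum_mul, ← mul_sum, hp.sum_X_mul_pderiv,
    sum_const, card_univ, Fintype.card_fin, ← psum.eq_1, ← linForm.eq_1, ← Nat.cast_smul_eq_nsmul ℝ,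
    mul_smul_comm, smul_mul_assoc, Nat.cast_add, Nat.cast_one]
  module

theorem sphIntegral_dirDeriv (a : Euc d) {p : MvPolynomial (Fin (d + 1)) ℝ}
    (hp : p.IsHomogeneous m) :
    sphIntegral d (dirDeriv a p) = (m + d) * sphIntegral d (linForm a * p) := by
  have integral_sum := congrArg (sphIntegral d) (sum_angDeriv_single_X_mul a hp)
  simp only [map_sum, sphIntegral_angDeriv, sum_const_zero, map_sub, map_smul, smul_eq_mul,
    sphIntegral_psum_two_mul] at integral_sum
  linarith

end SphereIntegral

section Orthogonality

open MvPolynomial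

variable {d k m : ℕ} {p q : MvPolynomial (Fin (d + 1)) ℝ}

theorem sphIntegral_mul_harmonic_succ (hp : p.IsHomogeneous m)
    (hq : q ∈ harmonicSubmodule d (k + 1)) :
    (m + k + d) * (k + 1) * sphIntegral d (p * q) =
      ∑ i, sphIntegral d (pderiv i p * pderiv i q) := by
  have integral_pderiv (i : Fin (d + 1)) : sphIntegral d (pderiv i (p * pderiv i q)) =
      (m + k + d) * sphIntegral d (X i * (p * pderiv i q)) := by
    have := sphIntegral_dirDeriv (EuclideanSpace.single i 1) (hp.mul (hq.1.pderiv (i := i)))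
    simpa [dirDeriv_single, linForm_single] using this
  have sum_pderiv :
      ∑ i, pderiv i (p * pderiv i q) = ∑ i, pderiv i p * pderiv i q := by
    have harm := (mem_harmonicSubmodule.1 hq).2
    rw [laplacian_apply] at harm
    simp only [Derivation.leibniz, smul_eq_mul, sum_add_distrib, ← mul_sum, harm, mul_zero,
      zero_add, mul_comm]
  have sum_X_mul : ∑ i, X i * (p * pderiv i q) = (k + 1 : ℝ) • (p * q) := by
    simp only [mul_left_comm _ p, ← mul_sum, (mem_harmonicSubmodule.1 hq).1.sum_X_mul_pderiv]
    simp [← Nat.cast_smul_eq_nsmul ℝ]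
  simp only [← map_sum, ← sum_pderiv]
  simp only [map_sum, integral_pderiv, ← mul_sum]
  simp only [← map_sum, sum_X_mul, map_smul, smul_eq_mul, mul_assoc]

theorem sphIntegral_mul_eq_zero_of_mem_harmonicSubmodule (hd : 0 < d) (hkm : m < k)
    (hp : p ∈ harmonicSubmodule d m) (hq : q ∈ harmonicSubmodule d k) :
    sphIntegral d (p * q) = 0 := by
  induction m generalizing k p q with
  | zero =>
    obtain ⟨k, rfl⟩ := Nat.exists_eq_succ_of_ne_zero hkm.ne'
    obtain ⟨c, rfl⟩ := exists_eq_C_of_mem_harmonicSubmodule_zero hp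
    have green := sphIntegral_mul_harmonic_succ hp.1 hq
    simp only [pderiv_C, zero_mul, map_zero, sum_const_zero] at green
    exact (mul_eq_zero.1 green).resolve_left (by positivity)
  | succ m ih =>
    obtain ⟨k, rfl⟩ := Nat.exists_eq_succ_of_ne_zero (Nat.ne_zero_of_lt hkm)
    have green := sphIntegral_mul_harmonic_succ hp.1 hq
    simp only [← dirDeriv_single, ih (Nat.lt_of_succ_lt_succ hkm)
      (dirDeriv_mem_harmonicSubmodule _ hp) (dirDeriv_mem_harmonicSubmodule _ hq),
      sum_const_zero] at green
    exact (mul_eq_zero.1 green).resolve_left (by positivity)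

end Orthogonality

noncomputable section Zonal

open MvPolynomial

variable {d k : ℕ}

/-- The homogenized Gegenbauer polynomial `|y|^k G_k^α((x, y) / |y|)`, defined by homogenizing the
three-term recurrence of `gegenbauer`. -/
def zonalPoly (α : ℝ) (x : Euc d) : ℕ → MvPolynomial (Fin (d + 1)) ℝ
  | 0 => 1
  | 1 => (2 * α) • linForm x
  | k + 2 => (2 * (k + 1 + α) / (k + 2)) • (linForm x * zonalPoly α x (k + 1)) -
      ((k + 2 * α) / (k + 2)) • (psum (Fin (d + 1)) ℝ 2 * zonalPoly α x k)

theorem zonalPoly_add_two (α : ℝ) (x : Euc d) (k : ℕ) :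
    zonalPoly α x (k + 2) =
      (2 * (k + 1 + α) / (k + 2)) • (linForm x * zonalPoly α x (k + 1)) -
        ((k + 2 * α) / (k + 2)) • (psum (Fin (d + 1)) ℝ 2 * zonalPoly α x k) := rfl

theorem isHomogeneous_zonalPoly (α : ℝ) (x : Euc d) (k : ℕ) :
    (zonalPoly α x k).IsHomogeneous k := by
  induction k using Nat.twoStepInduction with
  | zero => exact isHomogeneous_one _ _
  | one => exact (homogeneousSubmodule _ ℝ 1).smul_mem _ (isHomogeneous_linForm x)
  | more k ih ih' =>
    have hom₁ := (isHomogeneous_linForm x).mul ih'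
    have hom₂ := (isHomogeneous_psum (ι := Fin (d + 1)) 2).mul ih
    rw [show 1 + (k + 1) = k + 2 by ring] at hom₁
    rw [add_comm 2 k] at hom₂
    exact (homogeneousSubmodule _ ℝ (k + 2)).sub_mem (Submodule.smul_mem _ _ hom₁)
      (Submodule.smul_mem _ _ hom₂)

theorem restrictSph_zonalPoly (α : ℝ) (x : Euc d) (k : ℕ) (y : Sph d) :
    restrictSph d (zonalPoly α x k) y = (gegenbauer α k).eval ⟪x, (y : Euc d)⟫ := by
  induction k using Nat.twoStepInduction with
  | zero => simp [zonalPoly, gegenbauer]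
  | one => simp [zonalPoly, gegenbauer, restrictSph_linForm]
  | more k ih ih' =>
    simp [zonalPoly, gegenbauer, restrictSph_linForm, restrictSph_psum_two, ih, ih']

theorem dirDeriv_zonalPoly_succ (α : ℝ) {x : Euc d} (hx : ‖x‖ = 1) (k : ℕ) :
    dirDeriv x (zonalPoly α x (k + 1)) = (k + 2 * α) • zonalPoly α x k := by
  have dirDeriv_self : dirDeriv x (linForm x) = 1 := by simp [dirDeriv_linForm, hx]
  induction k using Nat.twoStepInduction with
  | zero => simp [zonalPoly, dirDeriv_self]
  | one =>
    simp only [zonalPoly, map_sub, Derivation.map_smul, Derivation.leibniz, dirDeriv_self,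
      dirDeriv_psum_two, smul_eq_mul, mul_one, mul_smul_comm]
    match_scalars
    ring
  | more k ih ih' =>
    have recurrence := zonalPoly_add_two α x k
    rw [zonalPoly_add_two, map_sub, Derivation.map_smul, Derivation.map_smul, Derivation.leibniz,
      Derivation.leibniz, dirDeriv_self, dirDeriv_psum_two, ih, ih']
    simp only [Nat.add_assoc, Nat.reduceAdd, recurrence, smul_eq_mul, mul_one, mul_smul_comm,
      smul_mul_assoc, mul_comm (zonalPoly α x (k + 1))]
    match_scalars <;> (field_simp; ring)

theorem laplacian_zonalPoly {x : Euc d} (hx : ‖x‖ = 1) (k : ℕ) :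
    laplacian d (zonalPoly ((d - 1) / 2) x k) = 0 := by
  induction k using Nat.twoStepInduction with
  | zero => simp [zonalPoly, laplacian_apply]
  | one => simp [zonalPoly, laplacian_linForm]
  | more k ih ih' =>
    rw [zonalPoly_add_two, map_sub, map_smul, map_smul, laplacian_linForm_mul,
      laplacian_psum_two_mul (isHomogeneous_zonalPoly _ _ _), ih, ih', dirDeriv_zonalPoly_succ _ hx]
    simp only [mul_zero, zero_add]
    match_scalars
    field_simp
    ring

theorem zonalPoly_mem_harmonicSubmodule {x : Euc d} (hx : ‖x‖ = 1) (k : ℕ) :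
    zonalPoly ((d - 1) / 2) x k ∈ harmonicSubmodule d k :=
  mem_harmonicSubmodule.2 ⟨isHomogeneous_zonalPoly _ x k, laplacian_zonalPoly hx k⟩

variable {q : MvPolynomial (Fin (d + 1)) ℝ}

theorem sphIntegral_zonalPoly_succ_mul (hd : 0 < d) {x : Euc d} (hx : ‖x‖ = 1)
    (hq : q ∈ harmonicSubmodule d (k + 1)) :
    (k + 1) * sphIntegral d (zonalPoly ((d - 1) / 2) x (k + 1) * q) =
      (2 * k + d - 1) * sphIntegral d (linForm x * (zonalPoly ((d - 1) / 2) x k * q)) := by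
  cases k with
  | zero =>
    simp only [zonalPoly, smul_mul_assoc, map_smul, smul_eq_mul, one_mul]
    push_cast
    ring
  | succ k =>
    have orthogonal := sphIntegral_mul_eq_zero_of_mem_harmonicSubmodule hd (by lia)
      (zonalPoly_mem_harmonicSubmodule hx k) hq
    rw [zonalPoly_add_two, sub_mul, smul_mul_assoc, smul_mul_assoc, mul_assoc, mul_assoc, map_sub,
      map_smul, map_smul, sphIntegral_psum_two_mul, orthogonal, smul_zero, sub_zero, smul_eq_mul]
    push_cast
    field_simp
    ring

theorem sphIntegral_zonalPoly_mul (hd : 0 < d) {x : Euc d} (hx : ‖x‖ = 1)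
    (hq : q ∈ harmonicSubmodule d k) :
    (2 * k + d - 1) * sphIntegral d (zonalPoly ((d - 1) / 2) x k * q) =
      (d - 1) * eval (fun i => x i) q := by
  induction k generalizing q with
  | zero =>
    obtain ⟨c, rfl⟩ := exists_eq_C_of_mem_harmonicSubmodule_zero hq
    simp [zonalPoly, sphIntegral_C]
  | succ k ih =>
    have hZ := zonalPoly_mem_harmonicSubmodule hx k
    have orthogonal : sphIntegral d (dirDeriv x (zonalPoly ((d - 1) / 2) x k) * q) = 0 :=
      sphIntegral_mul_eq_zero_of_mem_harmonicSubmodule hd (by lia)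
        (dirDeriv_mem_harmonicSubmodule x hZ) hq
    have by_parts := sphIntegral_dirDeriv x (hZ.1.mul hq.1)
    rw [Derivation.leibniz, map_add, smul_eq_mul, smul_eq_mul, mul_comm q, orthogonal, add_zero]
      at by_parts
    have recurrence := sphIntegral_zonalPoly_succ_mul hd hx hq
    have reproducing := ih (dirDeriv_mem_harmonicSubmodule x hq)
    rw [eval_dirDeriv_self x hq.1] at reproducing
    push_cast at by_parts reproducing ⊢
    refine mul_left_cancel₀ (Nat.cast_add_one_ne_zero (R := ℝ) k) ?_
    linear_combination (2 * k + d + 1) * recurrence - (2 * k + d - 1) * by_parts + reproducing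

end Zonal

noncomputable section HarmonicDecomposition

open MvPolynomial

variable {d n : ℕ}

theorem restrictSph_eq_zero_of_sphIntegral_mul_self {p : MvPolynomial (Fin (d + 1)) ℝ}
    (hp : sphIntegral d (p * p) = 0) : restrictSph d p = 0 := by
  rw [sphIntegral_apply, map_mul] at hp
  have square_ae_eq_zero := (integral_eq_zero_iff_of_nonneg
    (fun y => mul_self_nonneg (restrictSph d p y))
    (integrable_muSph (restrictSph d p * restrictSph d p))).1 hp
  refine DFunLike.coe_injective
    (((restrictSph d p).continuous.ae_eq_iff_eq (muSph d) continuous_zero).1 ?_)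
  filter_upwards [square_ae_eq_zero] with y hy using mul_self_eq_zero.1 hy

theorem restrictSph_eq_zero_of_sum_eq_zero (hd : 0 < d) {s : Finset ℕ}
    {p : ℕ → MvPolynomial (Fin (d + 1)) ℝ} (hp : ∀ j, p j ∈ harmonicSubmodule d j)
    (hsum : restrictSph d (∑ j ∈ s, p j) = 0) {k : ℕ} (hk : k ∈ s) : restrictSph d (p k) = 0 := by
  refine restrictSph_eq_zero_of_sphIntegral_mul_self ?_
  have orthogonal (j : ℕ) (hjk : j ≠ k) : sphIntegral d (p j * p k) = 0 := by
    obtain hlt | hlt := hjk.lt_or_gt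
    · exact sphIntegral_mul_eq_zero_of_mem_harmonicSubmodule hd hlt (hp j) (hp k)
    · rw [mul_comm]
      exact sphIntegral_mul_eq_zero_of_mem_harmonicSubmodule hd hlt (hp k) (hp j)
  calc sphIntegral d (p k * p k)
      = ∑ j ∈ s, sphIntegral d (p j * p k) :=
        (sum_eq_single_of_mem k hk fun j _ => orthogonal j).symm
    _ = sphIntegral d ((∑ j ∈ s, p j) * p k) := by rw [sum_mul, map_sum]
    _ = 0 := by simp [sphIntegral_apply, map_mul, hsum]

theorem mem_sphHarmonic {f : SphFun d} {k : ℕ} :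
    f ∈ sphHarmonic d k ↔ ∃ p ∈ harmonicSubmodule d k, f = restrictSph d p := by
  simp only [mem_harmonicSubmodule, funext_iff, restrictSph_apply, and_assoc]
  rfl

theorem harmComponent_restrictSph_sum (hd : 0 < d) {p : ℕ → MvPolynomial (Fin (d + 1)) ℝ}
    (hp : ∀ j, p j ∈ harmonicSubmodule d j) {k : ℕ} (hk : k ∈ Icc 1 n) :
    harmComponent d n (restrictSph d (∑ j ∈ Icc 1 n, p j)) k = restrictSph d (p k) := by
  have decomposition : ∃ c : ℕ → SphFun d, (∀ j, c j ∈ sphHarmonic d j) ∧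
      ⇑(restrictSph d (∑ j ∈ Icc 1 n, p j)) = ∑ j ∈ Icc 1 n, c j :=
    ⟨fun j => restrictSph d (p j), fun j => mem_sphHarmonic.2 ⟨p j, hp j, rfl⟩, by
      rw [map_sum, ContinuousMap.coe_sum]⟩
  rw [harmComponent, dif_pos decomposition]
  obtain ⟨chosen_mem, chosen_sum⟩ := decomposition.choose_spec
  choose q q_mem chosen_eq using fun j => mem_sphHarmonic.1 (chosen_mem j)
  have difference_sum : restrictSph d (∑ j ∈ Icc 1 n, (q j - p j)) = 0 := by
    rw [sum_sub_distrib, map_sub, sub_eq_zero, map_sum, ← DFunLike.coe_fn_eq, chosen_sum,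
      ContinuousMap.coe_sum]
    simp only [chosen_eq]
  have difference_eq_zero := restrictSph_eq_zero_of_sum_eq_zero hd
    (fun j => Submodule.sub_mem _ (q_mem j) (hp j)) difference_sum hk
  rw [map_sub, sub_eq_zero] at difference_eq_zero
  rw [chosen_eq, difference_eq_zero]

theorem innerW_restrictSph_sum (hd : 0 < d) {p q : ℕ → MvPolynomial (Fin (d + 1)) ℝ}
    (hp : ∀ j, p j ∈ harmonicSubmodule d j) (hq : ∀ j, q j ∈ harmonicSubmodule d j) :
    innerW d n (restrictSph d (∑ j ∈ Icc 1 n, p j)) (restrictSph d (∑ j ∈ Icc 1 n, q j)) =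
      ∑ k ∈ Icc 1 n, k * (k + d - 1) * sphIntegral d (p k * q k) := by
  refine sum_congr rfl fun k hk => ?_
  simp only [harmComponent_restrictSph_sum hd hp hk, harmComponent_restrictSph_sum hd hq hk,
    sphIntegral_apply, map_mul, ContinuousMap.mul_apply]

theorem innerW_zero (hd : 0 < d) : innerW d n 0 0 = 0 := by
  have inner_zero_families := innerW_restrictSph_sum (n := n) hd
    (fun j => (harmonicSubmodule d j).zero_mem) fun j => (harmonicSubmodule d j).zero_mem
  simpa using inner_zero_families

/-- The sums of harmonic homogeneous polynomials of degrees `1, …, n`, whose restrictions to the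
sphere form the space `P_n = ⊕_{k=1}^n H_k`. -/
def harmonicSum (d n : ℕ) : Submodule ℝ (MvPolynomial (Fin (d + 1)) ℝ) :=
  ⨆ k ∈ Icc 1 n, harmonicSubmodule d k

theorem mem_harmonicSum {p : MvPolynomial (Fin (d + 1)) ℝ} :
    p ∈ harmonicSum d n ↔
      ∃ q : ℕ → MvPolynomial (Fin (d + 1)) ℝ,
        (∀ j, q j ∈ harmonicSubmodule d j) ∧ ∑ j ∈ Icc 1 n, q j = p := by
  rw [harmonicSum, Submodule.mem_iSup_finset_iff_exists_sum]
  exact ⟨fun ⟨q, hq⟩ => ⟨fun j => q j, fun j => (q j).2, hq⟩,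
    fun ⟨q, hq, hsum⟩ => ⟨fun j => ⟨q j, hq j⟩, hsum⟩⟩

variable {p q : MvPolynomial (Fin (d + 1)) ℝ}

theorem angDeriv_mem_harmonicSum (a b : Euc d) (hp : p ∈ harmonicSum d n) :
    angDeriv a b p ∈ harmonicSum d n := by
  obtain ⟨p, p_mem, rfl⟩ := mem_harmonicSum.1 hp
  exact mem_harmonicSum.2
    ⟨fun j => angDeriv a b (p j), fun j => angDeriv_mem_harmonicSubmodule a b (p_mem j),
      (map_sum _ _ _).symm⟩

theorem innerW_angDeriv_left (hd : 0 < d) (a b : Euc d) (hp : p ∈ harmonicSum d n)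
    (hq : q ∈ harmonicSum d n) :
    innerW d n (restrictSph d (angDeriv a b p)) (restrictSph d q) =
      -innerW d n (restrictSph d p) (restrictSph d (angDeriv a b q)) := by
  obtain ⟨p, p_mem, rfl⟩ := mem_harmonicSum.1 hp
  obtain ⟨q, q_mem, rfl⟩ := mem_harmonicSum.1 hq
  rw [map_sum, map_sum (angDeriv a b) q,
    innerW_restrictSph_sum hd (fun j => angDeriv_mem_harmonicSubmodule a b (p_mem j)) q_mem,
    innerW_restrictSph_sum hd p_mem fun j => angDeriv_mem_harmonicSubmodule a b (q_mem j),
    ← sum_neg_distrib]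
  simp only [sphIntegral_angDeriv_mul, mul_neg]

end HarmonicDecomposition

section GegenbauerValues

theorem gegenbauer_succ_eval_one (α : ℝ) (k : ℕ) :
    (k + 1) * (gegenbauer α (k + 1)).eval 1 = (k + 2 * α) * (gegenbauer α k).eval 1 := by
  induction k with
  | zero => simp [gegenbauer]
  | succ k ih =>
    simp only [gegenbauer, Polynomial.eval_sub, Polynomial.eval_mul, Polynomial.eval_C,
      Polynomial.eval_X]
    push_cast
    field_simp
    linear_combination (k + 1 + 1 : ℝ) * ih

theorem gegenbauer_eval_one {d : ℕ} (hd : 0 < d) (k : ℕ) :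
    (k + d - 1) * (gegenbauer ((d - 1) / 2) k).eval 1 = (d - 1) * ((d + k - 1).choose k : ℝ) := by
  obtain ⟨e, rfl⟩ := Nat.exists_eq_succ_of_ne_zero hd.ne'
  induction k with
  | zero => simp [gegenbauer]
  | succ k ih =>
    have gegenbauer_step := gegenbauer_succ_eval_one (((e + 1 : ℕ) - 1 : ℝ) / 2) k
    have choose_step : ((e + k + 1) * (e + k).choose k : ℝ) =
        (e + k + 1).choose (k + 1) * (k + 1) := mod_cast Nat.add_one_mul_choose_eq (e + k) k
    rw [show e.succ + k - 1 = e + k by lia] at ih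
    rw [show e.succ + (k + 1) - 1 = e + k + 1 by lia]
    refine mul_left_cancel₀ (Nat.cast_add_one_ne_zero (R := ℝ) k) ?_
    push_cast at gegenbauer_step ih ⊢
    linear_combination (k + e + 1 : ℝ) * gegenbauer_step + (e + k + 1 : ℝ) * ih + e * choose_step

theorem gegenbauer_zero_succ (k : ℕ) : gegenbauer 0 (k + 1) = 0 := by
  induction k using Nat.twoStepInduction with
  | zero => simp [gegenbauer]
  | one => simp [gegenbauer]
  | more k ih ih' => rw [gegenbauer, ih, ih', mul_zero, mul_zero, mul_zero, sub_zero]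

theorem gw_one (n : ℕ) : gw 1 n = 0 := by
  refine sum_eq_zero fun k hk => ?_
  obtain ⟨k, rfl⟩ := Nat.exists_eq_add_of_le' (mem_Icc.1 hk).1
  simp [gegenbauer_zero_succ]

end GegenbauerValues

noncomputable section Kernel

variable {d n k : ℕ}

/-- The coefficient `dim H_k / (w_k G_k^α(1))` of `G_k^α` in `gw`, with `w_k = k (k + d - 1)` and
`α = (d - 1) / 2`. -/
def kernelCoeff (d k : ℕ) : ℝ :=
  dimHarm d k / (k * (k + d - 1) * (gegenbauer ((d - 1) / 2) k).eval 1)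

theorem weight_mul_kernelCoeff (hd : 1 < d) (hk : 0 < k) :
    k * (k + d - 1) * kernelCoeff d k * (d - 1) = 2 * k + d - 1 := by
  have hd' : (1 : ℝ) < d := mod_cast hd
  have hk' : (0 : ℝ) < k := mod_cast hk
  have choose_ne_zero : ((d + k - 1).choose k : ℝ) ≠ 0 :=
    mod_cast (Nat.choose_pos (by lia)).ne'
  have eval_one := gegenbauer_eval_one (zero_lt_one.trans hd) k
  have weight_ne_zero : (k + d - 1 : ℝ) ≠ 0 := by linarith
  have eval_one_ne_zero : (gegenbauer ((d - 1) / 2) k).eval (1 : ℝ) ≠ 0 :=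
    right_ne_zero_of_mul (eval_one ▸ mul_ne_zero (sub_pos.2 hd').ne' choose_ne_zero)
  rw [kernelCoeff, dimHarm]
  field_simp
  linear_combination (-(2 * k + d - 1 : ℝ)) * eval_one

/-- The polynomial in `y` restricting to `G_x = gw ((x, y))` on the sphere. -/
def kernelPoly (d n : ℕ) (x : Euc d) : MvPolynomial (Fin (d + 1)) ℝ :=
  ∑ k ∈ Icc 1 n, kernelCoeff d k • zonalPoly ((d - 1) / 2) x k

theorem restrictSph_kernelPoly (x : Euc d) (y : Sph d) :
    restrictSph d (kernelPoly d n x) y = GxFun d n x y := by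
  simp [kernelPoly, GxFun, gw, kernelCoeff, restrictSph_zonalPoly, Polynomial.eval_finsetSum]

theorem kernelPoly_mem_harmonicSum {x : Euc d} (hx : ‖x‖ = 1) :
    kernelPoly d n x ∈ harmonicSum d n :=
  mem_harmonicSum.2
    ⟨_, fun k => Submodule.smul_mem _ _ (zonalPoly_mem_harmonicSubmodule hx k), rfl⟩

theorem innerW_kernelPoly_left (hd : 1 < d) (x : Sph d) {q : MvPolynomial (Fin (d + 1)) ℝ}
    (hq : q ∈ harmonicSum d n) :
    innerW d n (restrictSph d (kernelPoly d n x)) (restrictSph d q) = restrictSph d q x := by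
  obtain ⟨q, q_mem, rfl⟩ := mem_harmonicSum.1 hq
  have hx : ‖(x : Euc d)‖ = 1 := norm_eq_of_mem_sphere x
  have hd' : (1 : ℝ) < d := mod_cast hd
  rw [kernelPoly, innerW_restrictSph_sum (zero_lt_one.trans hd)
    (fun k => Submodule.smul_mem _ _ (zonalPoly_mem_harmonicSubmodule hx k)) q_mem, map_sum,
    ContinuousMap.sum_apply]
  refine sum_congr rfl fun k hk => ?_
  have weight := weight_mul_kernelCoeff hd (mem_Icc.1 hk).1
  have reproducing := sphIntegral_zonalPoly_mul (zero_lt_one.trans hd) hx (q_mem k)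
  rw [smul_mul_assoc, map_smul, smul_eq_mul, restrictSph_apply]
  refine mul_left_cancel₀ (sub_pos.2 hd').ne' ?_
  linear_combination sphIntegral d (zonalPoly ((d - 1) / 2) x k * q k) * weight + reproducing

end Kernel

section ZonalFunctions

variable {d : ℕ} {x y : Sph d} {p : MvPolynomial (Fin (d + 1)) ℝ} {g : Polynomial ℝ}

theorem restrictSph_aeval_linForm (a : Euc d) (g : Polynomial ℝ) (z : Sph d) :
    restrictSph d (Polynomial.aeval (linForm a) g) z = g.eval ⟪a, (z : Euc d)⟫ := by
  rw [restrictSph_apply, ← eval_linForm, ← MvPolynomial.aeval_eq_eval,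
    ← Polynomial.aeval_algHom_apply, Polynomial.coe_aeval_eq_eval]

theorem restrictSph_eq_aeval_linForm {a : Euc d}
    (hp : ∀ z, restrictSph d p z = g.eval ⟪a, (z : Euc d)⟫) :
    restrictSph d p = restrictSph d (Polynomial.aeval (linForm a) g) :=
  ContinuousMap.ext fun z => by rw [hp, restrictSph_aeval_linForm]

theorem restrictSph_angDeriv_angDeriv (hxy : ⟪(x : Euc d), (y : Euc d)⟫ = 0)
    (hp : ∀ z, restrictSph d p z = g.eval ⟪(x : Euc d), (z : Euc d)⟫) (z : Sph d) :
    restrictSph d (angDeriv (x : Euc d) y (angDeriv (x : Euc d) y p)) z =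
      ⟪(y : Euc d), (z : Euc d)⟫ ^ 2 * g.derivative.derivative.eval ⟪(x : Euc d), (z : Euc d)⟫ -
        ⟪(x : Euc d), (z : Euc d)⟫ * g.derivative.eval ⟪(x : Euc d), (z : Euc d)⟫ := by
  rw [restrictSph_angDeriv_congr _ _ (restrictSph_angDeriv_congr _ _
      (restrictSph_eq_aeval_linForm hp)), derivation_derivation_aeval_of_rotation _
      (angDeriv_linForm_left (norm_eq_of_mem_sphere x) hxy)
      (angDeriv_linForm_right (norm_eq_of_mem_sphere y) hxy)]
  simp [restrictSph_aeval_linForm, restrictSph_linForm]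

theorem restrictSph_angDeriv_fourth_apply_self (hxy : ⟪(x : Euc d), (y : Euc d)⟫ = 0)
    (hp : ∀ z, restrictSph d p z = g.eval ⟪(x : Euc d), (z : Euc d)⟫) :
    restrictSph d ((angDeriv (x : Euc d) (y : Euc d))^[4] p) x =
      3 * g.derivative.derivative.eval 1 + g.derivative.eval 1 := by
  simp only [Function.iterate_succ, Function.iterate_zero, Function.comp_apply, id]
  rw [restrictSph_angDeriv_congr _ _ (restrictSph_angDeriv_congr _ _
      (restrictSph_angDeriv_congr _ _ (restrictSph_angDeriv_congr _ _
      (restrictSph_eq_aeval_linForm hp)))), derivation_fourth_aeval_of_rotation _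
      (angDeriv_linForm_left (norm_eq_of_mem_sphere x) hxy)
      (angDeriv_linForm_right (norm_eq_of_mem_sphere y) hxy)]
  have restrictSph_three : restrictSph d 3 x = 3 := by simp [restrictSph_apply]
  simp [restrictSph_aeval_linForm, restrictSph_linForm, real_inner_comm, hxy, restrictSph_three]

end ZonalFunctions

/-- Let `x₀, y₀ ∈ S^d` be orthogonal and
`G''(y) = (y₀,y)² g_w''((x₀,y)) − (x₀,y) g_w'((x₀,y))`. Then
`⟨G'', G''⟩_w = 3 g_w''(1) + g_w'(1)`. -/
theorem statement13 (d n : ℕ) (hd : 1 ≤ d) (x₀ y₀ : Sph d)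
    (horth : ⟪(x₀ : Euc d), (y₀ : Euc d)⟫ = 0) :
    innerW d n
      (fun y => ⟪(y₀ : Euc d), (y : Euc d)⟫ ^ 2 *
          (gw d n).derivative.derivative.eval ⟪(x₀ : Euc d), (y : Euc d)⟫ -
        ⟪(x₀ : Euc d), (y : Euc d)⟫ * (gw d n).derivative.eval ⟪(x₀ : Euc d), (y : Euc d)⟫)
      (fun y => ⟪(y₀ : Euc d), (y : Euc d)⟫ ^ 2 *
          (gw d n).derivative.derivative.eval ⟪(x₀ : Euc d), (y : Euc d)⟫ -
        ⟪(x₀ : Euc d), (y : Euc d)⟫ * (gw d n).derivative.eval ⟪(x₀ : Euc d), (y : Euc d)⟫) =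
      3 * (gw d n).derivative.derivative.eval 1 + (gw d n).derivative.eval 1 := by
  obtain rfl | hd' := hd.eq_or_lt
  · simpa [gw_one, Pi.zero_def] using innerW_zero (n := n) hd
  let L := angDeriv (x₀ : Euc d) y₀
  let K := kernelPoly d n x₀
  have L_mem {p} (hp : p ∈ harmonicSum d n) : L p ∈ harmonicSum d n :=
    angDeriv_mem_harmonicSum _ _ hp
  have K_mem : K ∈ harmonicSum d n := kernelPoly_mem_harmonicSum (norm_eq_of_mem_sphere x₀)
  have K_apply : ∀ y, restrictSph d K y = (gw d n).eval ⟪(x₀ : Euc d), (y : Euc d)⟫ :=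
    restrictSph_kernelPoly _
  simp only [← restrictSph_angDeriv_angDeriv horth K_apply]
  calc innerW d n (restrictSph d (L (L K))) (restrictSph d (L (L K)))
      = innerW d n (restrictSph d K) (restrictSph d (L (L (L (L K))))) := by
        rw [innerW_angDeriv_left hd _ _ (L_mem K_mem) (L_mem (L_mem K_mem)),
          innerW_angDeriv_left hd _ _ K_mem (L_mem (L_mem (L_mem K_mem))), neg_neg]
    _ = restrictSph d (L (L (L (L K)))) x₀ :=
        innerW_kernelPoly_left hd' x₀ (L_mem (L_mem (L_mem (L_mem K_mem))))
    _ = _ := restrictSph_angDeriv_fourth_apply_self horth K_apply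
end

section
/- For all x, y ∈ S^d, |g_w(1) − g_w((x,y))| ≤ g_w′(1)·‖x − y‖². -/
open MeasureTheory Finset
open scoped RealInnerProductSpace

noncomputable section
attribute [local instance] Classical.propDecidable

end

/-!
For `α ≥ 0` the Gegenbauer polynomials are nonnegative combinations of Chebyshev polynomials: with
`a i = α(α+1)⋯(α+i-1)/i!`, factoring the generating function as
`(1 - 2ts + s²)^{-α} = (1 - e^{iθ}s)^{-α} (1 - e^{-iθ}s)^{-α}` for `t = cos θ` gives
`G_k^α = ∑_{i+j=k} a i * a j * T_{i-j}`. Hence `g_w` lies in the cone generated by the `T_m`.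
Each `T_m` satisfies `|T_m'| ≤ T_m'(1)` on `[-1, 1]`, so the same holds throughout the cone, and the
mean value theorem bounds `|g_w(1) - g_w(t)|` by `g_w'(1) * (1 - t)`. For `t = (x, y)` the last
factor is `‖x - y‖² / 2`.
-/

open Polynomial
open Polynomial.Chebyshev (T)

section Multichoose

lemma succ_mul_multichoose_succ {R : Type*} [CommSemiring R] [BinomialRing R] (r : R) (n : ℕ) :
    (n + 1) * Ring.multichoose r (n + 1) = (r + n) * Ring.multichoose r n := by
  have := BinomialRing.toIsAddTorsionFree (R := R)
  have factorial_mul (m : ℕ) : m.factorial * Ring.multichoose r m = (ascPochhammer R m).eval r := by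
    rw [← nsmul_eq_mul, Ring.factorial_nsmul_multichoose_eq_ascPochhammer,
      ascPochhammer_smeval_eq_eval]
  refine nsmul_right_injective n.factorial_ne_zero ?_
  calc n.factorial • ((n + 1) * Ring.multichoose r (n + 1))
      = (n + 1).factorial * Ring.multichoose r (n + 1) := by
        rw [nsmul_eq_mul, Nat.factorial_succ]; push_cast; ring
    _ = n.factorial * Ring.multichoose r n * (r + n) := by
        rw [factorial_mul, ascPochhammer_succ_eval, factorial_mul]
    _ = n.factorial • ((r + n) * Ring.multichoose r n) := by
        rw [nsmul_eq_mul]; ring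

lemma multichoose_nonneg {R : Type*} [CommSemiring R] [LinearOrder R] [IsStrictOrderedRing R]
    [BinomialRing R] {r : R} (hr : 0 ≤ r) (n : ℕ) : 0 ≤ Ring.multichoose r n := by
  induction n with
  | zero => simp
  | succ n ih =>
    refine nonneg_of_mul_nonneg_right (a := (n + 1 : R)) ?_ (by positivity)
    rw [succ_mul_multichoose_succ]
    positivity

end Multichoose

section DiffSum

variable {R : Type*} [CommSemiring R]

/-- The sum `∑_{i+j=k} a i * a j * u (i - j)`. For `u m = z ^ m` it is the coefficient of `s ^ k` in
`A (z s) * A (z⁻¹ s)`, where `A s = ∑ a i * s ^ i`. -/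
def diffSum (a : ℕ → R) (u : ℤ → R) (k : ℕ) : R :=
  ∑ p ∈ antidiagonal k, a p.1 * a p.2 * u (p.1 - p.2)

lemma sum_antidiagonal_succ_fst_mul {α : R} {a : ℕ → R}
    (ha : ∀ i : ℕ, (i + 1) * a (i + 1) = (α + i) * a i) (F : ℕ × ℕ → R) (k : ℕ) :
    ∑ p ∈ antidiagonal (k + 1), p.1 * a p.1 * F p =
      ∑ p ∈ antidiagonal k, (α + p.1) * a p.1 * F (p.1 + 1, p.2) := by
  rw [Nat.sum_antidiagonal_succ]
  simp only [Nat.cast_zero, zero_mul, zero_add, Nat.cast_succ, ha]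

lemma sum_antidiagonal_succ_snd_mul {α : R} {a : ℕ → R}
    (ha : ∀ i : ℕ, (i + 1) * a (i + 1) = (α + i) * a i) (F : ℕ × ℕ → R) (k : ℕ) :
    ∑ p ∈ antidiagonal (k + 1), p.2 * a p.2 * F p =
      ∑ p ∈ antidiagonal k, (α + p.2) * a p.2 * F (p.1, p.2 + 1) := by
  rw [Nat.sum_antidiagonal_succ']
  simp only [Nat.cast_zero, zero_mul, zero_add, Nat.cast_succ, ha]

lemma succ_mul_diffSum_succ {α : R} {a : ℕ → R}
    (ha : ∀ i : ℕ, (i + 1) * a (i + 1) = (α + i) * a i) (u : ℤ → R) (k : ℕ) :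
    (k + 1) * diffSum a u (k + 1) =
      ∑ p ∈ antidiagonal k, a p.1 * a p.2 *
        ((α + p.1) * u (p.1 - p.2 + 1) + (α + p.2) * u (p.1 - p.2 - 1)) := by
  calc (k + 1) * diffSum a u (k + 1)
      = ∑ p ∈ antidiagonal (k + 1), p.1 * a p.1 * (a p.2 * u (p.1 - p.2)) +
          ∑ p ∈ antidiagonal (k + 1), p.2 * a p.2 * (a p.1 * u (p.1 - p.2)) := by
        rw [diffSum, mul_sum, ← sum_add_distrib]
        refine sum_congr rfl fun p hp => ?_
        have hk : (k : R) + 1 = p.1 + p.2 := by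
          rw [← Nat.cast_add_one, ← mem_antidiagonal.mp hp, Nat.cast_add]
        rw [hk]
        ring
    _ = _ := by
        rw [sum_antidiagonal_succ_fst_mul ha fun p => a p.2 * u (p.1 - p.2),
          sum_antidiagonal_succ_snd_mul ha fun p => a p.1 * u (p.1 - p.2), ← sum_add_distrib]
        refine sum_congr rfl fun p _ => ?_
        push_cast
        rw [sub_add_eq_add_sub, sub_sub]
        ring

lemma add_two_mul_mul_diffSum {α : R} {a : ℕ → R}
    (ha : ∀ i : ℕ, (i + 1) * a (i + 1) = (α + i) * a i) (u : ℤ → R) (k : ℕ) :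
    (k + 2 * α) * diffSum a u k =
      ∑ p ∈ antidiagonal (k + 1), a p.1 * a p.2 *
        (p.1 * u (p.1 - p.2 - 1) + p.2 * u (p.1 - p.2 + 1)) := by
  symm
  calc ∑ p ∈ antidiagonal (k + 1), a p.1 * a p.2 *
        (p.1 * u (p.1 - p.2 - 1) + p.2 * u (p.1 - p.2 + 1))
      = ∑ p ∈ antidiagonal (k + 1), p.1 * a p.1 * (a p.2 * u (p.1 - p.2 - 1)) +
          ∑ p ∈ antidiagonal (k + 1), p.2 * a p.2 * (a p.1 * u (p.1 - p.2 + 1)) := by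
        rw [← sum_add_distrib]
        exact sum_congr rfl fun p _ => by ring
    _ = (k + 2 * α) * diffSum a u k := by
        rw [sum_antidiagonal_succ_fst_mul ha fun p => a p.2 * u (p.1 - p.2 - 1),
          sum_antidiagonal_succ_snd_mul ha fun p => a p.1 * u (p.1 - p.2 + 1),
          ← sum_add_distrib, diffSum, mul_sum]
        refine sum_congr rfl fun p hp => ?_
        have hk : (k : R) = p.1 + p.2 := by rw [← mem_antidiagonal.mp hp, Nat.cast_add]
        have hfst : ((p.1 + 1 : ℕ) : ℤ) - p.2 - 1 = p.1 - p.2 := by push_cast; ring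
        have hsnd : (p.1 : ℤ) - (p.2 + 1 : ℕ) + 1 = p.1 - p.2 := by push_cast; ring
        rw [hk, hfst, hsnd]
        ring

lemma diffSum_add_two {R : Type*} [CommRing R] {α x : R} {a : ℕ → R} {u : ℤ → R}
    (ha : ∀ i : ℕ, (i + 1) * a (i + 1) = (α + i) * a i)
    (hu : ∀ m : ℤ, u (m + 1) + u (m - 1) = 2 * x * u m) (k : ℕ) :
    (k + 2) * diffSum a u (k + 2) =
      2 * (k + 1 + α) * (x * diffSum a u (k + 1)) - (k + 2 * α) * diffSum a u k := by
  have hsucc := succ_mul_diffSum_succ ha u (k + 1)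
  rw [Nat.cast_succ, add_assoc, one_add_one_eq_two] at hsucc
  rw [eq_sub_iff_add_eq, hsucc, add_two_mul_mul_diffSum ha, ← sum_add_distrib, diffSum, mul_sum,
    mul_sum]
  refine sum_congr rfl fun p hp => ?_
  have hk : (k : R) + 1 = p.1 + p.2 := by
    rw [← Nat.cast_add_one, ← mem_antidiagonal.mp hp, Nat.cast_add]
  rw [hk]
  linear_combination a p.1 * a p.2 * (p.1 + p.2 + α) * hu (p.1 - p.2)

end DiffSum

lemma gegenbauer_add_two (α : ℝ) (k : ℕ) :
    ((k : ℝ[X]) + 2) * gegenbauer α (k + 2) =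
      2 * ((k : ℝ[X]) + 1 + C α) * (X * gegenbauer α (k + 1)) -
        ((k : ℝ[X]) + 2 * C α) * gegenbauer α k := by
  have hk : (k : ℝ) + 2 ≠ 0 := by positivity
  have hC2 : (C 2 : ℝ[X]) = 2 := map_ofNat C 2
  have hC : (k : ℝ[X]) + 2 = C ((k : ℝ) + 2) := by simp [hC2]
  rw [gegenbauer, hC, mul_sub, ← mul_assoc, ← mul_assoc (C _) (C _) (gegenbauer α k),
    ← C_mul, ← C_mul, mul_div_cancel₀ _ hk, mul_div_cancel₀ _ hk]
  simp [hC2]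

lemma diffSum_multichoose_T_add_two (α : ℝ) (k : ℕ) :
    ((k : ℝ[X]) + 2) * diffSum (fun i => C (Ring.multichoose α i)) (T ℝ) (k + 2) =
      2 * ((k : ℝ[X]) + 1 + C α) * (X * diffSum (fun i => C (Ring.multichoose α i)) (T ℝ) (k + 1)) -
        ((k : ℝ[X]) + 2 * C α) * diffSum (fun i => C (Ring.multichoose α i)) (T ℝ) k := by
  refine diffSum_add_two (a := fun i => C (Ring.multichoose α i)) (fun i => ?_) (fun m => ?_) k
  · simpa using congrArg C (succ_mul_multichoose_succ α i)
  · rw [Chebyshev.T_add_one, sub_add_cancel]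

theorem gegenbauer_eq_diffSum (α : ℝ) (k : ℕ) :
    gegenbauer α k = diffSum (fun i => C (Ring.multichoose α i)) (T ℝ) k := by
  induction k using Nat.twoStepInduction with
  | zero => simp [gegenbauer, diffSum]
  | one => simp [gegenbauer, diffSum, Nat.antidiagonal_succ, two_mul, add_mul]
  | more k ih₀ ih₁ =>
    have hk : (k : ℝ[X]) + 2 ≠ 0 := by exact_mod_cast (k + 1).succ_ne_zero
    refine mul_left_cancel₀ hk ?_
    rw [gegenbauer_add_two, diffSum_multichoose_T_add_two, ih₀, ih₁]

section ChebyshevCone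

/-- The convex cone of nonnegative linear combinations of the Chebyshev polynomials of the first
kind. On `[-1, 1]`, each of its elements and all their derivatives attain their largest absolute
value at `1`. -/
noncomputable def chebyshevCone : PointedCone ℝ ℝ[X] :=
  PointedCone.hull ℝ (Set.range (T ℝ))

lemma T_mem_chebyshevCone (m : ℤ) : T ℝ m ∈ chebyshevCone :=
  PointedCone.subset_hull (Set.mem_range_self m)

lemma C_mul_mem_chebyshevCone {c : ℝ} (hc : 0 ≤ c) {p : ℝ[X]} (hp : p ∈ chebyshevCone) :
    C c * p ∈ chebyshevCone := by
  rw [← smul_eq_C_mul]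
  exact chebyshevCone.smul_mem hc hp

lemma abs_eval_iterate_derivative_le_of_mem_chebyshevCone {p : ℝ[X]} (hp : p ∈ chebyshevCone)
    (k : ℕ) {t : ℝ} (ht : |t| ≤ 1) :
    |(derivative^[k] p).eval t| ≤ (derivative^[k] p).eval 1 := by
  induction hp using Submodule.span_induction with
  | mem p hp =>
    obtain ⟨m, rfl⟩ := hp
    exact Chebyshev.abs_iterate_derivative_T_real_le m k ht
  | zero => simp
  | add p q _ _ ihp ihq =>
    rw [iterate_map_add, eval_add, eval_add]
    exact (abs_add_le _ _).trans (add_le_add ihp ihq)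
  | smul c p _ ih =>
    rw [iterate_derivative_smul, eval_smul, eval_smul, Nonneg.mk_smul, abs_smul, abs_of_nonneg c.2]
    exact smul_le_smul_of_nonneg_left ih c.2

lemma eval_one_nonneg_of_mem_chebyshevCone {p : ℝ[X]} (hp : p ∈ chebyshevCone) :
    0 ≤ p.eval 1 :=
  (abs_nonneg _).trans
    (abs_eval_iterate_derivative_le_of_mem_chebyshevCone hp 0 (abs_one (α := ℝ)).le)

lemma derivative_eval_one_nonneg_of_mem_chebyshevCone {p : ℝ[X]} (hp : p ∈ chebyshevCone) :
    0 ≤ p.derivative.eval 1 :=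
  (abs_nonneg _).trans
    (abs_eval_iterate_derivative_le_of_mem_chebyshevCone hp 1 (abs_one (α := ℝ)).le)

theorem abs_eval_one_sub_eval_le_of_mem_chebyshevCone {p : ℝ[X]} (hp : p ∈ chebyshevCone) {t : ℝ}
    (ht : t ∈ Set.Icc (-1) 1) :
    |p.eval 1 - p.eval t| ≤ p.derivative.eval 1 * (1 - t) := by
  have hderiv (s : ℝ) (hs : s ∈ Set.Icc (-1) 1) : ‖deriv p.eval s‖ ≤ p.derivative.eval 1 := by
    rw [Polynomial.deriv, Real.norm_eq_abs]
    exact abs_eval_iterate_derivative_le_of_mem_chebyshevCone hp 1 (abs_le.mpr hs)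
  have hmvt := (convex_Icc (-1 : ℝ) 1).norm_image_sub_le_of_norm_deriv_le
    (fun s _ => p.differentiableAt) hderiv ht (Set.right_mem_Icc.mpr (by norm_num))
  rwa [Real.norm_eq_abs, Real.norm_eq_abs, abs_of_nonneg (sub_nonneg.mpr ht.2)] at hmvt

end ChebyshevCone

theorem gegenbauer_mem_chebyshevCone {α : ℝ} (hα : 0 ≤ α) (k : ℕ) :
    gegenbauer α k ∈ chebyshevCone := by
  rw [gegenbauer_eq_diffSum, diffSum]
  refine sum_mem fun p _ => ?_
  rw [← C_mul]
  exact C_mul_mem_chebyshevCone (mul_nonneg (multichoose_nonneg hα _) (multichoose_nonneg hα _))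
    (T_mem_chebyshevCone _)

theorem gw_mem_chebyshevCone {d : ℕ} (hd : 1 ≤ d) (n : ℕ) : gw d n ∈ chebyshevCone := by
  have hd' : (0 : ℝ) ≤ d - 1 := sub_nonneg.mpr (mod_cast hd)
  refine sum_mem fun k _ => ?_
  have hgegenbauer := gegenbauer_mem_chebyshevCone (div_nonneg hd' zero_le_two) k
  refine C_mul_mem_chebyshevCone ?_ hgegenbauer
  have hvalue := eval_one_nonneg_of_mem_chebyshevCone hgegenbauer
  rw [dimHarm, add_sub_assoc, add_sub_assoc]
  positivity

lemma norm_sub_sq_eq_of_norm_eq_one {E : Type*} [NormedAddCommGroup E] [InnerProductSpace ℝ E]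
    {x y : E} (hx : ‖x‖ = 1) (hy : ‖y‖ = 1) : ‖x - y‖ ^ 2 = 2 * (1 - ⟪x, y⟫) := by
  rw [norm_sub_sq_real, hx, hy]
  ring

/-- For all `x, y ∈ S^d`, `|g_w(1) − g_w((x,y))| ≤ g_w'(1)·‖x − y‖²`. -/
theorem statement17 (d n : ℕ) (hd : 1 ≤ d) (x y : Sph d) :
    |(gw d n).eval 1 - (gw d n).eval ⟪(x : Euc d), (y : Euc d)⟫| ≤
      (gw d n).derivative.eval 1 * ‖(x : Euc d) - (y : Euc d)‖ ^ 2 := by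
  have hx : ‖(x : Euc d)‖ = 1 := norm_eq_of_mem_sphere x
  have hy : ‖(y : Euc d)‖ = 1 := norm_eq_of_mem_sphere y
  have hcone := gw_mem_chebyshevCone hd n
  have hinner := real_inner_mem_Icc_of_norm_eq_one hx hy
  refine (abs_eval_one_sub_eval_le_of_mem_chebyshevCone hcone hinner).trans ?_
  rw [norm_sub_sq_eq_of_norm_eq_one hx hy]
  refine mul_le_mul_of_nonneg_left ?_ (derivative_eval_one_nonneg_of_mem_chebyshevCone hcone)
  linarith [hinner.2]
end
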